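/- Let A be the shift operator on L²(ℝ) and let N ∈ ℕ. Then the monomial kernel K(t) = t^N is liftable: for every t ≥ 0, t^N = ⟨N!·1_{[-N,-N+1]}, exp(tA) 1_{[0,1]}⟩_{L²(ℝ)}. -/

import Mathlib

open MeasureTheory

/-- The indicator function of the interval `[a, b]`, regarded as an element of `L²(ℝ)`. -/
noncomputable def ind (a b : ℝ) : Lp ℝ 2 (volume : Measure ℝ) :=
  indicatorConstLp 2 (measurableSet_Icc : MeasurableSet (Set.Icc a b))
    (by rw [Real.volume_Icc]; exact ENNReal.ofReal_ne_top) (1 : ℝ)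

lemma shift_ind (A : Lp ℝ 2 (volume : Measure ℝ) →L[ℝ] Lp ℝ 2 (volume : Measure ℝ))
    (hA : ∀ f : Lp ℝ 2 (volume : Measure ℝ), (A f : ℝ → ℝ) =ᵐ[volume] fun x => f (x + 1))
    (a b : ℝ) : A (ind a b) = ind (a - 1) (b - 1) := by
  apply Lp.ext
  refine (hA _).trans ?_
  have h1 : (ind a b : ℝ → ℝ) =ᵐ[volume] (Set.Icc a b).indicator fun _ => (1:ℝ) :=
    indicatorConstLp_coeFn
  have h2 : (ind (a-1) (b-1) : ℝ → ℝ) =ᵐ[volume] (Set.Icc (a-1) (b-1)).indicator fun _ => (1:ℝ) :=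
    indicatorConstLp_coeFn
  have h3 := (measurePreserving_add_right (volume : Measure ℝ) 1).quasiMeasurePreserving.ae_eq_comp h1
  filter_upwards [h2, h3] with x hx2 hx3
  simp only [Function.comp] at hx3
  rw [hx2, hx3]
  simp only [Set.indicator, Set.mem_Icc, sub_le_iff_le_add, le_sub_iff_add_le]

lemma pow_ind (A : Lp ℝ 2 (volume : Measure ℝ) →L[ℝ] Lp ℝ 2 (volume : Measure ℝ))
    (hA : ∀ f : Lp ℝ 2 (volume : Measure ℝ), (A f : ℝ → ℝ) =ᵐ[volume] fun x => f (x + 1))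
    (k : ℕ) : (A ^ k) (ind 0 1) = ind (-(k : ℝ)) (-(k : ℝ) + 1) := by
  induction k with
  | zero => simp
  | succ k ih =>
    rw [pow_succ', mul_apply_eq_comp, ih, shift_ind A hA]
    push_cast
    congr 1 <;> ring

lemma inner_ind_self (N : ℕ) :
    (inner ℝ (ind (-(N : ℝ)) (-(N : ℝ) + 1)) (ind (-(N : ℝ)) (-(N : ℝ) + 1)) : ℝ) = 1 := by
  unfold ind
  rw [L2.inner_indicatorConstLp_indicatorConstLp (hμs := by rw [Real.volume_Icc]; exact ENNReal.ofReal_ne_top) (hμt := by rw [Real.volume_Icc]; exact ENNReal.ofReal_ne_top)]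
  simp

lemma inner_ind_ne (N k : ℕ) (h : k ≠ N) :
    (inner ℝ (ind (-(N : ℝ)) (-(N : ℝ) + 1)) (ind (-(k : ℝ)) (-(k : ℝ) + 1)) : ℝ) = 0 := by
  unfold ind
  rw [L2.inner_indicatorConstLp_indicatorConstLp (hμs := by rw [Real.volume_Icc]; exact ENNReal.ofReal_ne_top) (hμt := by rw [Real.volume_Icc]; exact ENNReal.ofReal_ne_top), Set.Icc_inter_Icc]
  have : volume.real (Set.Icc (max (-(N : ℝ)) (-(k : ℝ))) (min (-(N : ℝ) + 1) (-(k : ℝ) + 1))) = 0 := by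
    rw [measureReal_def, Real.volume_Icc, ENNReal.ofReal_of_nonpos, ENNReal.toReal_zero]
    rcases lt_or_gt_of_ne h with h | h
    · have : (k : ℝ) + 1 ≤ N := by exact_mod_cast h
      linarith [le_max_right (-(N : ℝ)) (-(k : ℝ)), min_le_left (-(N : ℝ) + 1) (-(k : ℝ) + 1)]
    · have : (N : ℝ) + 1 ≤ k := by exact_mod_cast h
      linarith [le_max_left (-(N : ℝ)) (-(k : ℝ)), min_le_right (-(N : ℝ) + 1) (-(k : ℝ) + 1)]
  simp [this]

/-- Let `A` be the shift operator on `L²(ℝ)` and `N ∈ ℕ`.  Then the monomial kernel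
`K(t) = t^N` is liftable: for every `t ≥ 0`,
`t^N = ⟨N! 1_{[-N,-N+1]}, exp(tA) 1_{[0,1]}⟩`. -/
theorem monomial_kernel_liftable
    (A : Lp ℝ 2 (volume : Measure ℝ) →L[ℝ] Lp ℝ 2 (volume : Measure ℝ))
    (hA : ∀ f : Lp ℝ 2 (volume : Measure ℝ), (A f : ℝ → ℝ) =ᵐ[volume] fun x => f (x + 1))
    (N : ℕ) (t : ℝ) (ht : 0 ≤ t) :
    t ^ N = (inner ℝ ((N.factorial : ℝ) • ind (-(N : ℝ)) (-(N : ℝ) + 1))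
      (NormedSpace.exp (t • A) (ind 0 1)) : ℝ) := by
  have h := NormedSpace.exp_series_hasSum_exp' (𝕂 := ℝ) (t • A)
  have h2 := h.mapL (ContinuousLinearMap.apply ℝ (Lp ℝ 2 (volume : Measure ℝ)) (ind 0 1))
  have h3 := h2.mapL (innerSL ℝ ((N.factorial : ℝ) • ind (-(N : ℝ)) (-(N : ℝ) + 1)))
  refine HasSum.unique ?_ h3
  have hN : (N.factorial : ℝ) ≠ 0 := by positivity
  convert hasSum_single N ?_ using 1
  · simp [smul_pow, pow_ind A hA, inner_smul_left, inner_smul_right, inner_ind_self]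
    rw [← real_inner_self_eq_norm_sq, inner_ind_self]
    field_simp
  · intro k hk
    simp [smul_pow, pow_ind A hA, inner_smul_left, inner_smul_right, inner_ind_ne N k hk]
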